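/- Let f be a strictly convex standard self-concordant function on ℝⁿ, x a point with eigenvalues σ_1 ≥ … ≥ σ_n > 0 of ∇²f(x), and let ε ∈ (0, 1] satisfy ε ≤ σ_n/σ_{N+1}. Set η := (3 − √(9 − 4ε))/2. Then η ∈ (0, (3 − √5)/2], and if 0 < λ(x) < η then the unit step with the truncated direction d̂ := −Q⁻¹ ∇f(x) (Q the truncated approximation of ∇²f(x) with parameter N) yields λ(x + d̂) < λ(x). -/

import Mathlib

open Matrix

section BilinearForms

variable {E : Type*} [NormedAddCommGroup E] [NormedSpace ℝ E]

/-- A symmetric bilinear form dominated on the diagonal by a positive definite form `P` is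
dominated by `P` off the diagonal. -/
lemma abs_bilin_le_of_abs_diag_le {P B : E →L[ℝ] E →L[ℝ] ℝ} {c : ℝ}
    (hPs : ∀ u v, P u v = P v u) (hP : ∀ v, v ≠ 0 → 0 < P v v)
    (hBs : ∀ u v, B u v = B v u) (hB : ∀ v, |B v v| ≤ c * P v v) (u v : E) :
    |B u v| ≤ c * (√(P u u) * √(P v v)) := by
  rcases eq_or_ne u 0 with rfl | hu
  · simp
  rcases eq_or_ne v 0 with rfl | hv
  · simp
  have ha := Real.sqrt_pos.2 (hP u hu)
  have hb := Real.sqrt_pos.2 (hP v hv)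
  have ha2 := Real.sq_sqrt (hP u hu).le
  have hb2 := Real.sq_sqrt (hP v hv).le
  set a := √(P u u)
  set b := √(P v v)
  have h1 := abs_le.1 (hB (b • u + a • v))
  have h2 := abs_le.1 (hB (b • u - a • v))
  simp only [map_add, map_sub, map_smul, _root_.add_apply,
    _root_.sub_apply, _root_.smul_apply, smul_eq_mul, hBs v u, hPs v u,
    ← ha2, ← hb2] at h1 h2
  have hab := mul_pos ha hb
  rw [abs_le]
  constructor
  · refine le_of_mul_le_mul_left ?_ hab
    nlinarith
  · refine le_of_mul_le_mul_left ?_ hab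
    nlinarith

variable [FiniteDimensional ℝ E]

lemma isCompact_setOf_bilin_eq_one {P : E →L[ℝ] E →L[ℝ] ℝ} (hP : ∀ v, v ≠ 0 → 0 < P v v) :
    IsCompact {v : E | P v v = 1} := by
  have hc : Continuous fun v : E => P v v := by fun_prop
  have : ProperSpace E := FiniteDimensional.proper ℝ E
  refine Metric.isCompact_of_isClosed_isBounded (isClosed_eq hc continuous_const) ?_
  rcases (Metric.sphere (0 : E) 1).eq_empty_or_nonempty with he | hne
  · refine (Bornology.isBounded_singleton (x := (0 : E))).subset fun v hv => ?_
    by_contra h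
    have h0 : ‖v‖ ≠ 0 := norm_ne_zero_iff.2 h
    have : (‖v‖⁻¹ • v) ∈ Metric.sphere (0 : E) 1 := by
      simp [norm_smul, h0]
    rw [he] at this
    exact this
  · obtain ⟨z, hz, hmin⟩ := (isCompact_sphere (0 : E) 1).exists_isMinOn hne hc.continuousOn
    have hz1 : ‖z‖ = 1 := by simpa using hz
    have hm : 0 < P z z := hP z (by rintro rfl; simp at hz1)
    refine (Metric.isBounded_closedBall (x := (0 : E)) (r := √(1 / P z z))).subset fun v hv => ?_
    have hv1 : P v v = 1 := hv
    have h0 : ‖v‖ ≠ 0 := norm_ne_zero_iff.2 (by rintro rfl; simp at hv1)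
    have h1 : P z z ≤ P (‖v‖⁻¹ • v) (‖v‖⁻¹ • v) := hmin (by simp [norm_smul, h0])
    simp only [map_smul, _root_.smul_apply, smul_eq_mul, hv1] at h1
    rw [mem_closedBall_zero_iff]
    apply Real.le_sqrt_of_sq_le
    rw [le_div_iff₀ hm]
    have hv0 : 0 < ‖v‖ := by positivity
    calc ‖v‖ ^ 2 * P z z ≤ ‖v‖ ^ 2 * (‖v‖⁻¹ * (‖v‖⁻¹ * 1)) := by gcongr
      _ = 1 := by field_simp

/-- Banach's theorem for trilinear forms: a symmetric trilinear form dominated on the diagonal by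
the cube of a Euclidean norm satisfies the same bound off the diagonal. -/
lemma abs_trilin_le_of_abs_diag_le {P : E →L[ℝ] E →L[ℝ] ℝ} {A : E →L[ℝ] E →L[ℝ] E →L[ℝ] ℝ}
    {c : ℝ} (hPs : ∀ u v, P u v = P v u) (hP : ∀ v, v ≠ 0 → 0 < P v v)
    (hA₁ : ∀ u v w, A u v w = A v u w) (hA₂ : ∀ u v w, A u v w = A u w v)
    (hA : ∀ v, |A v v v| ≤ c * √(P v v) ^ 3) (u v : E) :
    |A u v v| ≤ c * √(P u u) * P v v := by
  rcases eq_or_ne u 0 with rfl | hu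
  · simp
  rcases eq_or_ne v 0 with rfl | hv
  · simp
  set K : Set E := {v : E | P v v = 1} with hK
  have hKc : IsCompact K := isCompact_setOf_bilin_eq_one hP
  have hnormal : ∀ w : E, w ≠ 0 → (√(P w w))⁻¹ • w ∈ K := by
    intro w hw
    have h := hP w hw
    have h1 := Real.sq_sqrt h.le
    have h2 := Real.sqrt_pos.2 h
    simp only [hK, Set.mem_ofPred_eq, map_smul, _root_.smul_apply, smul_eq_mul]
    field_simp
    exact h1.symm
  have hF : Continuous fun p : E × E => |A p.1 p.2 p.2| := by fun_prop
  obtain ⟨p₀, hp₀, hmax⟩ := (hKc.prod hKc).exists_isMaxOn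
    ⟨(_, _), hnormal u hu, hnormal v hv⟩ hF.continuousOn
  set M := |A p₀.1 p₀.2 p₀.2|
  have hbound : ∀ a ∈ K, ∀ b ∈ K, |A a b b| ≤ M := fun a ha b hb =>
    hmax (show (a, b) ∈ K ×ˢ K from ⟨ha, hb⟩)
  have hbound' : ∀ a ∈ K, ∀ w, |A a w w| ≤ M * P w w := by
    intro a ha w
    rcases eq_or_ne w 0 with rfl | hw
    · simp
    have h := hbound a ha _ (hnormal w hw)
    have h2 := Real.sqrt_pos.2 (hP w hw)
    have h1 := Real.sq_sqrt (hP w hw).le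
    simp only [map_smul, _root_.smul_apply, smul_eq_mul, abs_mul, abs_inv,
      abs_of_pos h2] at h
    rw [← h1]
    field_simp at h
    linarith
  have hS : IsCompact ((K ×ˢ K) ∩ {p : E × E | |A p.1 p.2 p.2| = M}) :=
    (hKc.prod hKc).inter_right (isClosed_eq hF continuous_const)
  have hG : Continuous fun p : E × E => P p.1 p.2 := by fun_prop
  obtain ⟨⟨a, b⟩, ⟨⟨ha, hb⟩, hab⟩, hmax'⟩ := hS.exists_isMaxOn ⟨p₀, hp₀, rfl⟩ hG.continuousOn
  have hS' : ∀ a' ∈ K, ∀ b' ∈ K, |A a' b' b'| = M → P a' b' ≤ P a b := fun a' ha' b' hb' h =>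
    hmax' (show (a', b') ∈ (K ×ˢ K) ∩ {p : E × E | |A p.1 p.2 p.2| = M} from ⟨⟨ha', hb'⟩, h⟩)
  simp only [hK, Set.mem_ofPred_eq] at ha hb hab
  set ρ := P a b with hρ
  have hρ0 : 0 ≤ ρ := by
    have := hS' (-a) (by simpa [hK] using ha) b hb (by simpa using hab)
    simp only [map_neg, _root_.neg_apply] at this
    linarith
  have hs : P (a + b) (a + b) = 2 + 2 * ρ := by
    simp only [map_add, _root_.add_apply, hPs b a, ha, hb, ← hρ]; ring
  have he : P (a - b) (a - b) = 2 - 2 * ρ := by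
    simp only [map_sub, _root_.sub_apply, hPs b a, ha, hb, ← hρ]; ring
  have hs0 : a + b ≠ 0 := by
    intro h
    rw [h] at hs
    simp at hs
    linarith
  have hCs : M * (2 + 2 * ρ) ≤ |A b (a + b) (a + b)| := by
    have h1 : 4 * A a b b = A b (a + b) (a + b) - A b (a - b) (a - b) := by
      simp only [map_add, map_sub, _root_.add_apply, _root_.sub_apply]
      rw [hA₁ a b b, hA₂ b b a]; ring
    have h2 : 4 * M ≤ |A b (a + b) (a + b)| + |A b (a - b) (a - b)| := by
      have h4 : 4 * M = |4 * A a b b| := by rw [abs_mul, hab]; norm_num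
      rw [h4, h1]
      exact abs_sub _ _
    have h3 := hbound' b hb (a - b)
    rw [he] at h3
    linarith
  have hr := Real.sqrt_pos.2 (show 0 < 2 + 2 * ρ by linarith)
  have hr2 := Real.sq_sqrt (show 0 ≤ 2 + 2 * ρ by linarith)
  have hwK := hnormal _ hs0
  rw [hs] at hwK
  set r := √(2 + 2 * ρ)
  have hle : M ≤ |A b (r⁻¹ • (a + b)) (r⁻¹ • (a + b))| := by
    simp only [map_smul, _root_.smul_apply, smul_eq_mul, abs_mul, abs_inv,
      abs_of_pos hr]
    field_simp
    rw [hr2]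
    linarith
  have hmem := hS' b hb _ hwK (le_antisymm (hbound _ hb _ hwK) hle)
  have hval : P b (r⁻¹ • (a + b)) = r / 2 := by
    simp only [map_smul, map_add, smul_eq_mul, hb, hPs b a, ← hρ]
    field_simp
    linarith
  rw [hval] at hmem
  have hρ1 : 1 ≤ ρ := by nlinarith
  have hab' : a = b := by
    by_contra h
    have := hP _ (sub_ne_zero.2 h)
    linarith
  have hMc : M ≤ c := by
    have := hA b
    rw [hb, Real.sqrt_one] at this
    rw [← hab, hab']
    linarith
  have h := hbound' _ (hnormal u hu) v
  have h2 := Real.sqrt_pos.2 (hP u hu)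
  simp only [map_smul, _root_.smul_apply, smul_eq_mul, abs_mul, abs_inv,
      abs_of_pos h2] at h
  rw [inv_mul_le_iff₀ h2] at h
  have h3 := hP v hv
  calc _ ≤ _ := h
    _ = M * √(P u u) * P v v := by ring
    _ ≤ _ := by gcongr

end BilinearForms

section SelfConcordant

variable {E : Type*} [NormedAddCommGroup E] [NormedSpace ℝ E]

lemma hasDerivAt_comp_line {F : Type*} [NormedAddCommGroup F] [NormedSpace ℝ F] {g : E → F}
    (hg : Differentiable ℝ g) (x d : E) (t : ℝ) :
    HasDerivAt (fun s : ℝ => g (x + s • d)) (fderiv ℝ g (x + t • d) d) t := by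
  have h : HasDerivAt (fun s : ℝ => x + s • d) d t := by
    simpa using ((hasDerivAt_id t).smul_const d).const_add x
  exact (hg (x + t • d)).hasFDerivAt.comp_hasDerivAt t h

lemma le_of_hasDerivAt_nonneg {g g' : ℝ → ℝ} {t : ℝ} (ht : t ∈ Set.Icc (0 : ℝ) 1)
    (hd : ∀ s ∈ Set.Icc (0 : ℝ) 1, HasDerivAt g (g' s) s)
    (hg : ∀ s ∈ Set.Icc (0 : ℝ) 1, 0 ≤ g' s) : g 0 ≤ g t := by
  have hm : MonotoneOn g (Set.Icc 0 1) := by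
    refine monotoneOn_of_deriv_nonneg (convex_Icc _ _)
      (fun s hs => (hd s hs).continuousAt.continuousWithinAt)
      (fun s hs => (hd s (interior_subset hs)).differentiableAt.differentiableWithinAt)
      (fun s hs => ?_)
    rw [(hd s (interior_subset hs)).deriv]
    exact hg s (interior_subset hs)
  exact hm ⟨le_rfl, zero_le_one⟩ ht ht.1

lemma sqrt_le_div_of_abs_deriv_le {ψ ψ' : ℝ → ℝ} (hd : ∀ t, HasDerivAt ψ (ψ' t) t)
    (hpos : ∀ t, 0 < ψ t) (hψ : ∀ t, |ψ' t| ≤ 2 * √(ψ t) ^ 3) (hr : √(ψ 0) < 1)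
    {t : ℝ} (ht : t ∈ Set.Icc (0 : ℝ) 1) : √(ψ t) ≤ √(ψ 0) / (1 - t * √(ψ 0)) := by
  have h := le_of_hasDerivAt_nonneg (g := fun s => (√(ψ s))⁻¹ + s)
    (g' := fun s => -(ψ' s / (2 * √(ψ s))) / √(ψ s) ^ 2 + 1) ht
    (fun s _ => (((hd s).sqrt (hpos s).ne').inv (Real.sqrt_pos.2 (hpos s)).ne').add
      (hasDerivAt_id s))
    (fun s _ => by
      have h1 := (abs_le.1 (hψ s)).2
      have h2 := Real.sqrt_pos.2 (hpos s)
      have : -(ψ' s / (2 * √(ψ s))) / √(ψ s) ^ 2 + 1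
          = (2 * √(ψ s) ^ 3 - ψ' s) / (2 * √(ψ s) ^ 3) := by
        field_simp
        ring
      rw [this]
      exact div_nonneg (by linarith) (by positivity))
  have h0 := Real.sqrt_pos.2 (hpos 0)
  have h1 := Real.sqrt_pos.2 (hpos t)
  have h2 : 0 < 1 - t * √(ψ 0) := by nlinarith [ht.1, ht.2]
  rw [le_div_iff₀ h2]
  simp only [add_zero] at h
  field_simp at h
  nlinarith

lemma growth_bounds_of_abs_deriv_le {φ φ' : ℝ → ℝ} {r : ℝ} (hr0 : 0 ≤ r) (hr1 : r < 1)
    (hd : ∀ t, HasDerivAt φ (φ' t) t)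
    (hφ : ∀ t ∈ Set.Icc (0 : ℝ) 1, |φ' t| ≤ 2 * (r / (1 - t * r)) * φ t)
    {t : ℝ} (ht : t ∈ Set.Icc (0 : ℝ) 1) :
    (1 - t * r) ^ 2 * φ 0 ≤ φ t ∧ φ t ≤ φ 0 / (1 - t * r) ^ 2 := by
  have hpos : ∀ s ∈ Set.Icc (0 : ℝ) 1, 0 < 1 - s * r := fun s hs => by nlinarith [hs.1, hs.2]
  have hl : ∀ s, HasDerivAt (fun s : ℝ => (1 - s * r) ^ 2) (-(2 * r * (1 - s * r))) s := by
    intro s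
    refine ((((hasDerivAt_id s).mul_const r).const_sub 1).pow 2).congr_deriv ?_
    simp only [id]
    ring
  have hcancel : ∀ s ∈ Set.Icc (0 : ℝ) 1,
      2 * (r / (1 - s * r)) * φ s * (1 - s * r) = 2 * r * φ s := fun s hs => by
    have := (hpos s hs).ne'
    rw [mul_right_comm, mul_assoc 2, div_mul_cancel₀ _ this]
  have h1 := le_of_hasDerivAt_nonneg (g := fun s => φ s / (1 - s * r) ^ 2)
    ht (fun s hs => (hd s).div (hl s) (pow_pos (hpos s hs) 2).ne')
    (fun s hs => by
      have h := (abs_le.1 (hφ s hs)).1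
      have hp := hpos s hs
      refine div_nonneg ?_ (by positivity)
      have : φ' s * (1 - s * r) ^ 2 - φ s * -(2 * r * (1 - s * r))
        = (1 - s * r) * (φ' s * (1 - s * r) + 2 * r * φ s) := by ring
      rw [this, ← hcancel s hs, ← add_mul]
      exact mul_nonneg hp.le (mul_nonneg (by linarith) hp.le))
  have h2 := le_of_hasDerivAt_nonneg (g := fun s => -(φ s * (1 - s * r) ^ 2))
    ht (fun s hs => ((hd s).mul (hl s)).neg)
    (fun s hs => by
      have h := (abs_le.1 (hφ s hs)).2
      have hp := hpos s hs
      have : -(φ' s * (1 - s * r) ^ 2 + φ s * -(2 * r * (1 - s * r)))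
        = (1 - s * r) * (2 * r * φ s - φ' s * (1 - s * r)) := by ring
      rw [this, ← hcancel s hs, ← sub_mul]
      exact mul_nonneg hp.le (mul_nonneg (by linarith) hp.le))
  have hp := hpos t ht
  simp only [zero_mul, sub_zero, one_pow, div_one, mul_one] at h1 h2
  rw [le_div_iff₀ (by positivity)] at h1 ⊢
  exact ⟨by linarith, by linarith⟩

variable {f : E → ℝ}

lemma fderiv_fderiv_fderiv_comm_left (hf : ContDiff ℝ 3 f) (y u v w : E) :
    fderiv ℝ (fderiv ℝ (fderiv ℝ f)) y u v w = fderiv ℝ (fderiv ℝ (fderiv ℝ f)) y v u w := by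
  have h1 : ContDiff ℝ 2 (fderiv ℝ f) := hf.fderiv_right (by norm_num)
  have := (h1.contDiffAt (x := y)).isSymmSndFDerivAt (by simp)
  rw [this.eq u v]

lemma fderiv_fderiv_comm (hf : ContDiff ℝ 3 f) (y u v : E) :
    fderiv ℝ (fderiv ℝ f) y u v = fderiv ℝ (fderiv ℝ f) y v u :=
  ((hf.contDiffAt (x := y)).isSymmSndFDerivAt (by simp; norm_num)).eq u v

lemma differentiable_fderiv_fderiv (hf : ContDiff ℝ 3 f) :
    Differentiable ℝ (fderiv ℝ (fderiv ℝ f)) := by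
  have h1 : ContDiff ℝ 2 (fderiv ℝ f) := hf.fderiv_right (by norm_num)
  have h2 : ContDiff ℝ 1 (fderiv ℝ (fderiv ℝ f)) := h1.fderiv_right (by norm_num)
  exact h2.differentiable (by norm_num)

lemma hasDerivAt_fderiv_fderiv_line (hf : ContDiff ℝ 3 f) (x d v w : E) (t : ℝ) :
    HasDerivAt (fun s : ℝ => fderiv ℝ (fderiv ℝ f) (x + s • d) v w)
      (fderiv ℝ (fderiv ℝ (fderiv ℝ f)) (x + t • d) d v w) t := by
  have h := hasDerivAt_comp_line (F := E →L[ℝ] E →L[ℝ] ℝ) (differentiable_fderiv_fderiv hf) x d t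
  have h' := h.clm_apply (hasDerivAt_const t v)
  simpa using h'.clm_apply (hasDerivAt_const t w)

lemma hasDerivAt_fderiv_line (hf : ContDiff ℝ 3 f) (x d w : E) (t : ℝ) :
    HasDerivAt (fun s : ℝ => fderiv ℝ f (x + s • d) w)
      (fderiv ℝ (fderiv ℝ f) (x + t • d) d w) t := by
  have h1 : ContDiff ℝ 2 (fderiv ℝ f) := hf.fderiv_right (by norm_num)
  have h := hasDerivAt_comp_line (h1.differentiable (by norm_num)) x d t
  simpa using h.clm_apply (hasDerivAt_const t w)

lemma fderiv_fderiv_fderiv_comm_right (hf : ContDiff ℝ 3 f) (y u v w : E) :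
    fderiv ℝ (fderiv ℝ (fderiv ℝ f)) y u v w = fderiv ℝ (fderiv ℝ (fderiv ℝ f)) y u w v := by
  have h1 := hasDerivAt_fderiv_fderiv_line hf y u v w 0
  have h2 := hasDerivAt_fderiv_fderiv_line hf y u w v 0
  simp only [fderiv_fderiv_comm hf _ v w] at h1
  simpa using h1.unique h2

lemma deriv_line (hf : ContDiff ℝ 3 f) (x u : E) :
    deriv (fun t : ℝ => f (x + t • u)) = fun t => fderiv ℝ f (x + t • u) u :=
  funext fun t => (hasDerivAt_comp_line (hf.differentiable (by norm_num)) x u t).deriv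

lemma iteratedDeriv_two_line (hf : ContDiff ℝ 3 f) (x u : E) :
    iteratedDeriv 2 (fun t : ℝ => f (x + t • u))
      = fun t => fderiv ℝ (fderiv ℝ f) (x + t • u) u u := by
  rw [iteratedDeriv_succ, iteratedDeriv_one, deriv_line hf]
  exact funext fun t => (hasDerivAt_fderiv_line hf x u u t).deriv

lemma iteratedDeriv_three_line (hf : ContDiff ℝ 3 f) (x u : E) :
    iteratedDeriv 3 (fun t : ℝ => f (x + t • u))
      = fun t => fderiv ℝ (fderiv ℝ (fderiv ℝ f)) (x + t • u) u u u := by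
  rw [iteratedDeriv_succ, iteratedDeriv_two_line hf]
  exact funext fun t => (hasDerivAt_fderiv_fderiv_line hf x u u u t).deriv

variable [FiniteDimensional ℝ E]

/-- Along a step `d` with local norm `r < 1`, the Hessian of a self-concordant function is
multiplied by a factor between `(1 - t r) ^ 2` and `(1 - t r)⁻¹ ^ 2`. -/
lemma hessian_bounds_of_selfConcordant (hf : ContDiff ℝ 3 f)
    (hpd : ∀ y v : E, v ≠ 0 → 0 < fderiv ℝ (fderiv ℝ f) y v v)
    (hsc : ∀ y v : E, |fderiv ℝ (fderiv ℝ (fderiv ℝ f)) y v v v|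
      ≤ 2 * √(fderiv ℝ (fderiv ℝ f) y v v) ^ 3)
    {x d : E} {r : ℝ} (hr : r = √(fderiv ℝ (fderiv ℝ f) x d d)) (hr1 : r < 1)
    (w : E) {t : ℝ} (ht : t ∈ Set.Icc (0 : ℝ) 1) :
    (1 - t * r) ^ 2 * fderiv ℝ (fderiv ℝ f) x w w ≤ fderiv ℝ (fderiv ℝ f) (x + t • d) w w ∧
      fderiv ℝ (fderiv ℝ f) (x + t • d) w w
        ≤ fderiv ℝ (fderiv ℝ f) x w w / (1 - t * r) ^ 2 := by
  rcases eq_or_ne d 0 with rfl | hd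
  · simp [hr]
  have hψ : ∀ s ∈ Set.Icc (0 : ℝ) 1,
      √(fderiv ℝ (fderiv ℝ f) (x + s • d) d d) ≤ r / (1 - s * r) := by
    intro s hs
    have := sqrt_le_div_of_abs_deriv_le (ψ := fun s => fderiv ℝ (fderiv ℝ f) (x + s • d) d d)
      (hasDerivAt_fderiv_fderiv_line hf x d d d) (fun s => hpd _ _ hd) (fun s => hsc _ _)
      (by simpa [← hr] using hr1) hs
    simpa [← hr] using this
  have h := growth_bounds_of_abs_deriv_le (φ := fun s => fderiv ℝ (fderiv ℝ f) (x + s • d) w w)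
    (hr ▸ Real.sqrt_nonneg _) hr1 (hasDerivAt_fderiv_fderiv_line hf x d w w) (fun s hs => by
      refine (abs_trilin_le_of_abs_diag_le (fderiv_fderiv_comm hf (x + s • d)) (hpd _)
        (fderiv_fderiv_fderiv_comm_left hf _) (fderiv_fderiv_fderiv_comm_right hf _)
        (hsc _) d w).trans ?_
      have h0 : 0 ≤ fderiv ℝ (fderiv ℝ f) (x + s • d) w w := by
        rcases eq_or_ne w 0 with rfl | hw
        · simp
        · exact (hpd _ _ hw).le
      have := hψ s hs
      gcongr) ht
  simpa using h

/-- The error of the first-order model of the gradient of a self-concordant function. -/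
lemma abs_fderiv_sub_le_of_selfConcordant (hf : ContDiff ℝ 3 f)
    (hpd : ∀ y v : E, v ≠ 0 → 0 < fderiv ℝ (fderiv ℝ f) y v v)
    (hsc : ∀ y v : E, |fderiv ℝ (fderiv ℝ (fderiv ℝ f)) y v v v|
      ≤ 2 * √(fderiv ℝ (fderiv ℝ f) y v v) ^ 3)
    {x d : E} {r : ℝ} (hr : r = √(fderiv ℝ (fderiv ℝ f) x d d)) (hr1 : r < 1) (w : E) :
    |fderiv ℝ f (x + d) w - fderiv ℝ f x w - fderiv ℝ (fderiv ℝ f) x d w|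
      ≤ r ^ 2 / (1 - r) * √(fderiv ℝ (fderiv ℝ f) x w w) := by
  have hr0 : 0 ≤ r := hr ▸ Real.sqrt_nonneg _
  set W := √(fderiv ℝ (fderiv ℝ f) x w w) with hW
  have hpos : ∀ s ∈ Set.Icc (0 : ℝ) 1, 0 < 1 - s * r := fun s hs => by nlinarith [hs.1, hs.2]
  have hdiff : ∀ s ∈ Set.Icc (0 : ℝ) 1,
      |fderiv ℝ (fderiv ℝ f) (x + s • d) d w - fderiv ℝ (fderiv ℝ f) x d w|
        ≤ (1 / (1 - s * r) ^ 2 - 1) * (r * W) := by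
    intro s hs
    have hp := hpos s hs
    have := abs_bilin_le_of_abs_diag_le
      (B := fderiv ℝ (fderiv ℝ f) (x + s • d) - fderiv ℝ (fderiv ℝ f) x)
      (c := 1 / (1 - s * r) ^ 2 - 1)
      (fderiv_fderiv_comm hf x) (hpd x)
      (fun u v => by simp [fderiv_fderiv_comm hf _ u v]) (fun v => by
        obtain ⟨h1, h2⟩ := hessian_bounds_of_selfConcordant hf hpd hsc hr hr1 v hs
        have h0 : 0 ≤ fderiv ℝ (fderiv ℝ f) x v v := by
          rcases eq_or_ne v 0 with rfl | hv
          · simp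
          · exact (hpd _ _ hv).le
        simp only [_root_.sub_apply]
        rw [abs_le]
        constructor
        · have h3 : 0 ≤ (1 - s * r) ^ 2 + 1 / (1 - s * r) ^ 2 - 2 := by
            have : (1 - s * r) ^ 2 + 1 / (1 - s * r) ^ 2 - 2
              = (1 - s * r - 1 / (1 - s * r)) ^ 2 := by field_simp; ring
            rw [this]; positivity
          nlinarith [mul_nonneg h3 h0]
        · rw [div_eq_mul_one_div] at h2
          linarith) d w
    simpa [← hr, ← hW] using this
  have hB : ∀ s ∈ Set.Icc (0 : ℝ) 1, HasDerivAt (fun s : ℝ => (s / (1 - s * r) - s) * (r * W))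
      ((1 / (1 - s * r) ^ 2 - 1) * (r * W)) s := by
    intro s hs
    have hp := hpos s hs
    have h := (((hasDerivAt_id s).div (((hasDerivAt_id s).mul_const r).const_sub 1)
      hp.ne').sub (hasDerivAt_id s)).mul_const (r * W)
    refine h.congr_deriv ?_
    simp only [id]
    field_simp
    ring
  have hk : ∀ s, HasDerivAt (fun s : ℝ => fderiv ℝ f (x + s • d) w - fderiv ℝ f x w
      - s * fderiv ℝ (fderiv ℝ f) x d w)
      (fderiv ℝ (fderiv ℝ f) (x + s • d) d w - fderiv ℝ (fderiv ℝ f) x d w) s := by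
    intro s
    have h := ((hasDerivAt_fderiv_line hf x d w s).sub_const (fderiv ℝ f x w)).sub
      ((hasDerivAt_id s).mul_const (fderiv ℝ (fderiv ℝ f) x d w))
    rw [one_mul] at h
    exact h
  have h1 := le_of_hasDerivAt_nonneg (t := 1) (by simp) (fun s hs => (hB s hs).sub (hk s))
    (fun s hs => by linarith [(abs_le.1 (hdiff s hs)).2])
  have h2 := le_of_hasDerivAt_nonneg (t := 1) (by simp) (fun s hs => (hB s hs).add (hk s))
    (fun s hs => by linarith [(abs_le.1 (hdiff s hs)).1])
  simp at h1 h2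
  have hv : r ^ 2 / (1 - r) * W = ((1 - r)⁻¹ - 1) * (r * W) := by
    have : 1 - r ≠ 0 := by linarith
    field_simp
    ring
  rw [hv, abs_le]
  constructor <;> linarith

end SelfConcordant

section SpectralEstimates

variable {ι : Type*} [Fintype ι]

lemma dotProduct_mulVec_of_eigenvector {A : Matrix ι ι ℝ} (hA : A.IsSymm) {v : ι → ℝ} {μ : ℝ}
    (hv : A *ᵥ v = μ • v) (w : ι → ℝ) : v ⬝ᵥ (A *ᵥ w) = μ * (v ⬝ᵥ w) := by
  rw [dotProduct_mulVec, ← mulVec_transpose, hA.eq, hv, smul_dotProduct, smul_eq_mul]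

variable [DecidableEq ι]

lemma dotProduct_eq_sum_of_orthonormal {u : ι → ι → ℝ}
    (hu : ∀ i j, u i ⬝ᵥ u j = if i = j then (1 : ℝ) else 0) (a b : ι → ℝ) :
    a ⬝ᵥ b = ∑ i, (u i ⬝ᵥ a) * (u i ⬝ᵥ b) := by
  have h1 : Matrix.of u * (Matrix.of u)ᵀ = 1 := by
    ext i j
    simpa [Matrix.mul_apply, dotProduct, Matrix.one_apply] using hu i j
  have h2 : (Matrix.of u)ᵀ * Matrix.of u = 1 := mul_eq_one_comm.1 h1
  calc a ⬝ᵥ b = a ⬝ᵥ (((Matrix.of u)ᵀ * Matrix.of u) *ᵥ b) := by rw [h2, one_mulVec]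
    _ = (Matrix.of u *ᵥ a) ⬝ᵥ (Matrix.of u *ᵥ b) := by
      rw [← mulVec_mulVec, dotProduct_mulVec, vecMul_transpose]
    _ = _ := rfl

lemma isUnit_det_of_eigenbasis {Q : Matrix ι ι ℝ} (hQ : Q.IsSymm) {u : ι → ι → ℝ} {q : ι → ℝ}
    (hu : ∀ i j, u i ⬝ᵥ u j = if i = j then (1 : ℝ) else 0)
    (hq : ∀ i, 0 < q i) (hQu : ∀ i, Q *ᵥ u i = q i • u i) : IsUnit Q.det := by
  rw [isUnit_iff_ne_zero]
  intro h
  obtain ⟨v, hv, hv0⟩ := Matrix.exists_mulVec_eq_zero_iff.2 h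
  apply hv
  rw [← dotProduct_self_eq_zero, dotProduct_eq_sum_of_orthonormal hu]
  refine Finset.sum_eq_zero fun i _ => ?_
  have := dotProduct_mulVec_of_eigenvector hQ (hQu i) v
  rw [hv0, dotProduct_zero] at this
  have := (mul_eq_zero.1 this.symm).resolve_left (hq i).ne'
  rw [this, zero_mul]

variable {H Q : Matrix ι ι ℝ} {u : ι → ι → ℝ} {σ q : ι → ℝ} {ε : ℝ} {g h d : ι → ℝ}

/-- If `ε Q ≤ H ≤ Q` with a common eigenbasis, the quasi-Newton step `d = -Q⁻¹ g` is no longer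
in the `H`-norm than the Newton step `H⁻¹ g`, and leaves a residual gradient in the linear model
of dual norm at most `1 - ε` times that of `g`. -/
lemma quasiNewton_step_bounds (hH : H.IsSymm) (hQ : Q.IsSymm)
    (hu : ∀ i j, u i ⬝ᵥ u j = if i = j then (1 : ℝ) else 0)
    (hσ : ∀ i, 0 < σ i) (hHu : ∀ i, H *ᵥ u i = σ i • u i) (hQu : ∀ i, Q *ᵥ u i = q i • u i)
    (hσq : ∀ i, σ i ≤ q i) (hqσ : ∀ i, ε * q i ≤ σ i) (hε : ε ≤ 1)
    (hh : H *ᵥ h = g) (hd : Q *ᵥ d = -g) :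
    d ⬝ᵥ (H *ᵥ d) ≤ g ⬝ᵥ h ∧
      ∀ w, |g ⬝ᵥ w + d ⬝ᵥ (H *ᵥ w)| ≤ (1 - ε) * (√(g ⬝ᵥ h) * √(w ⬝ᵥ (H *ᵥ w))) := by
  have hHw : ∀ i w, u i ⬝ᵥ (H *ᵥ w) = σ i * (u i ⬝ᵥ w) := fun i w =>
    dotProduct_mulVec_of_eigenvector hH (hHu i) w
  have hg : ∀ i, u i ⬝ᵥ g = σ i * (u i ⬝ᵥ h) := fun i => by rw [← hHw, hh]
  have hdi : ∀ i, u i ⬝ᵥ d = -(σ i / q i * (u i ⬝ᵥ h)) := by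
    intro i
    have h1 := dotProduct_mulVec_of_eigenvector hQ (hQu i) d
    rw [hd, dotProduct_neg, hg] at h1
    have h2 := (hσ i).trans_le (hσq i)
    field_simp
    linarith
  have hp1 : ∀ i, σ i / q i ≤ 1 := fun i =>
    (div_le_one ((hσ i).trans_le (hσq i))).2 (hσq i)
  have hp0 : ∀ i, 0 < σ i / q i := fun i => div_pos (hσ i) ((hσ i).trans_le (hσq i))
  have hpε : ∀ i, ε ≤ σ i / q i := fun i =>
    (le_div_iff₀ ((hσ i).trans_le (hσq i))).2 (hqσ i)
  have hgh : g ⬝ᵥ h = ∑ i, σ i * (u i ⬝ᵥ h) ^ 2 := by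
    rw [dotProduct_eq_sum_of_orthonormal hu]
    exact Finset.sum_congr rfl fun i _ => by rw [hg]; ring
  have hquad : ∀ w, w ⬝ᵥ (H *ᵥ w) = ∑ i, σ i * (u i ⬝ᵥ w) ^ 2 := by
    intro w
    rw [dotProduct_eq_sum_of_orthonormal hu]
    exact Finset.sum_congr rfl fun i _ => by rw [hHw]; ring
  refine ⟨?_, fun w => ?_⟩
  · rw [hquad, hgh]
    refine Finset.sum_le_sum fun i _ => mul_le_mul_of_nonneg_left ?_ (hσ i).le
    rw [hdi, neg_sq, mul_pow]
    exact mul_le_of_le_one_left (sq_nonneg _) (pow_le_one₀ (hp0 i).le (hp1 i))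
  · have hsum : g ⬝ᵥ w + d ⬝ᵥ (H *ᵥ w)
        = ∑ i, (1 - σ i / q i) * (σ i * ((u i ⬝ᵥ h) * (u i ⬝ᵥ w))) := by
      rw [dotProduct_eq_sum_of_orthonormal hu, dotProduct_eq_sum_of_orthonormal hu d,
        ← Finset.sum_add_distrib]
      exact Finset.sum_congr rfl fun i _ => by rw [hg, hHw, hdi]; ring
    have hcs := Real.sum_mul_le_sqrt_mul_sqrt Finset.univ
      (fun i => √(σ i) * |u i ⬝ᵥ h|) (fun i => √(σ i) * |u i ⬝ᵥ w|)
    simp only [mul_pow, sq_abs, Real.sq_sqrt (hσ _).le] at hcs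
    rw [hsum, hgh, hquad]
    refine (Finset.abs_sum_le_sum_abs _ _).trans ?_
    refine le_trans ?_ (mul_le_mul_of_nonneg_left hcs (sub_nonneg.2 hε))
    rw [Finset.mul_sum]
    refine Finset.sum_le_sum fun i _ => ?_
    rw [abs_mul, abs_mul, abs_mul, abs_of_nonneg (sub_nonneg.2 (hp1 i)), abs_of_pos (hσ i)]
    have hs := Real.mul_self_sqrt (hσ i).le
    calc (1 - σ i / q i) * (σ i * (|u i ⬝ᵥ h| * |u i ⬝ᵥ w|))
        ≤ (1 - ε) * (σ i * (|u i ⬝ᵥ h| * |u i ⬝ᵥ w|)) :=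
          mul_le_mul_of_nonneg_right (by linarith [hpε i])
            (mul_nonneg (hσ i).le (by positivity))
      _ = (1 - ε) * ((√(σ i) * √(σ i)) * (|u i ⬝ᵥ h| * |u i ⬝ᵥ w|)) := by rw [hs]
      _ = _ := by ring

end SpectralEstimates

lemma rpow_three_halves {a : ℝ} (ha : 0 ≤ a) : a ^ ((3 : ℝ) / 2) = √a ^ 3 := by
  rw [Real.sqrt_eq_rpow, ← Real.rpow_natCast, ← Real.rpow_mul ha]
  norm_num

/-- The map `lam ↦ ((1 - ε) lam + lam² / (1 - lam)) / (1 - lam)` lies below the identity to the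
left of the smaller root of `lam² - 3 lam + ε`. -/
lemma decrement_bound_lt {ε lam r m : ℝ} (hε0 : 0 < ε) (hε1 : ε ≤ 1) (hlam : 0 < lam)
    (hη : lam < (3 - √(9 - 4 * ε)) / 2) (hr0 : 0 ≤ r) (hr : r ≤ lam)
    (hm : (1 - r) * m ≤ (1 - ε) * lam + r ^ 2 / (1 - r)) : m < lam := by
  have hs2 := Real.sq_sqrt (show 0 ≤ 9 - 4 * ε by linarith)
  have hs0 := Real.sqrt_nonneg (9 - 4 * ε)
  have hlam1 : lam < 1 := by nlinarith
  have hroot : 0 < lam ^ 2 - 3 * lam + ε := by nlinarith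
  by_contra! hcon
  have h1 : 0 < 1 - r := by linarith
  have h2 : (1 - r) * lam ≤ (1 - ε) * lam + r ^ 2 / (1 - r) :=
    (mul_le_mul_of_nonneg_left hcon h1.le).trans hm
  have h3 : r ^ 2 / (1 - r) ≤ lam ^ 2 / (1 - lam) := by
    have : 0 < 1 - lam := by linarith
    gcongr
  have h4 : (1 - lam) * lam ≤ (1 - ε) * lam + lam ^ 2 / (1 - lam) := by nlinarith
  rw [← sub_le_iff_le_add', le_div_iff₀ (by linarith)] at h4
  have h5 : lam * (lam ^ 2 - (2 + ε) * lam + ε) ≤ 0 := by nlinarith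
  have h6 : 0 < lam ^ 2 - (2 + ε) * lam + ε := by nlinarith
  nlinarith

/-- Let `f` be strictly convex standard self-concordant, `x`
a point with eigenvalues `σ_1 ≥ … ≥ σ_n > 0` of `∇²f(x)`, and let `ε ∈ (0, 1]`
satisfy `ε ≤ σ_n/σ_{N+1}`.  Set `η := (3 − √(9 − 4ε))/2`.  Then
`η ∈ (0, (3 − √5)/2]`, and if `0 < λ(x) < η` then the unit step with the
truncated direction `d̂ = −Q⁻¹ ∇f(x)` yields `λ(x + d̂) < λ(x)`. -/
theorem stmt14 {n N : ℕ} (hN : 1 ≤ N) (hNn : N < n)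
    (f : (Fin n → ℝ) → ℝ) (grad : (Fin n → ℝ) → Fin n → ℝ)
    (hess : (Fin n → ℝ) → Matrix (Fin n) (Fin n) ℝ)
    (hf : ContDiff ℝ 3 f)
    (hconv : StrictConvexOn ℝ Set.univ f)
    (hgrad : ∀ x u : Fin n → ℝ, deriv (fun t : ℝ => f (x + t • u)) 0 = grad x ⬝ᵥ u)
    (hhessq : ∀ x u : Fin n → ℝ,
      iteratedDeriv 2 (fun t : ℝ => f (x + t • u)) 0 = u ⬝ᵥ (hess x *ᵥ u))
    (hhsymm : ∀ x, (hess x).IsSymm)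
    (hhpd : ∀ x, (hess x).PosDef)
    (hsc : ∀ x u : Fin n → ℝ, ∀ t : ℝ,
      |iteratedDeriv 3 (fun s : ℝ => f (x + s • u)) t|
        ≤ 2 * iteratedDeriv 2 (fun s : ℝ => f (x + s • u)) t ^ ((3 : ℝ) / 2))
    (hclosed : ∀ c : ℝ, IsClosed {x | f x ≤ c})
    (hbdd : BddBelow (Set.range f))
    (x : Fin n → ℝ)
    (σ : Fin n → ℝ) (u : Fin n → Fin n → ℝ)
    (hσpos : ∀ i, 0 < σ i)
    (hσmono : ∀ i j : Fin n, i ≤ j → σ j ≤ σ i)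
    (hortho : ∀ i j : Fin n, u i ⬝ᵥ u j = if i = j then (1 : ℝ) else 0)
    (heig : ∀ i, hess x *ᵥ u i = σ i • u i)
    (Q : Matrix (Fin n) (Fin n) ℝ) (hQsymm : Q.IsSymm)
    (hQeig : ∀ i : Fin n, Q *ᵥ u i = (if (i : ℕ) < N then σ i else σ ⟨N, hNn⟩) • u i)
    (ε : ℝ) (hε0 : 0 < ε) (hε1 : ε ≤ 1)
    (hε : ε ≤ σ ⟨n - 1, by omega⟩ / σ ⟨N, hNn⟩)
    (η : ℝ) (hη : η = (3 - Real.sqrt (9 - 4 * ε)) / 2)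
    (lam : ℝ) (hlam : lam = Real.sqrt (grad x ⬝ᵥ ((hess x)⁻¹ *ᵥ grad x))) :
    0 < η ∧ η ≤ (3 - Real.sqrt 5) / 2 ∧
    (0 < lam → lam < η →
      Real.sqrt (grad (x + -(Q⁻¹ *ᵥ grad x)) ⬝ᵥ
        ((hess (x + -(Q⁻¹ *ᵥ grad x)))⁻¹ *ᵥ grad (x + -(Q⁻¹ *ᵥ grad x)))) < lam) := by
  have hs2 := Real.sq_sqrt (show 0 ≤ 9 - 4 * ε by linarith)
  have hs0 := Real.sqrt_nonneg (9 - 4 * ε)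
  refine ⟨by rw [hη]; nlinarith, ?_, fun hl0 hl1 => ?_⟩
  · have := Real.sqrt_le_sqrt (show 5 ≤ 9 - 4 * ε by linarith)
    rw [hη]
    linarith
  have hD1 : ∀ y v, fderiv ℝ f y v = grad y ⬝ᵥ v := by
    intro y v
    rw [← hgrad, deriv_line hf]
    simp
  have hdiag : ∀ y v, fderiv ℝ (fderiv ℝ f) y v v = v ⬝ᵥ (hess y *ᵥ v) := by
    intro y v
    rw [← hhessq, iteratedDeriv_two_line hf]
    simp
  have hcomm : ∀ y v w : Fin n → ℝ, v ⬝ᵥ (hess y *ᵥ w) = w ⬝ᵥ (hess y *ᵥ v) := by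
    intro y v w
    rw [dotProduct_mulVec, ← mulVec_transpose, (hhsymm y).eq, dotProduct_comm]
  have hD2 : ∀ y v w, fderiv ℝ (fderiv ℝ f) y v w = v ⬝ᵥ (hess y *ᵥ w) := by
    intro y v w
    have h := hdiag y (v + w)
    simp only [map_add, _root_.add_apply, mulVec_add, dotProduct_add, add_dotProduct,
      hdiag, fderiv_fderiv_comm hf y w v, hcomm y w v] at h
    linarith
  have hpd : ∀ y v, v ≠ 0 → 0 < fderiv ℝ (fderiv ℝ f) y v v := by
    intro y v hv
    rw [hD2]
    simpa using (hhpd y).dotProduct_mulVec_pos hv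
  have hnn : ∀ y v, 0 ≤ fderiv ℝ (fderiv ℝ f) y v v := by
    intro y v
    rcases eq_or_ne v 0 with rfl | hv
    · simp
    · exact (hpd y v hv).le
  have hD3 : ∀ y v, |fderiv ℝ (fderiv ℝ (fderiv ℝ f)) y v v v|
      ≤ 2 * √(fderiv ℝ (fderiv ℝ f) y v v) ^ 3 := by
    intro y v
    have h := hsc y v 0
    rw [iteratedDeriv_three_line hf, iteratedDeriv_two_line hf] at h
    simp only [zero_smul, add_zero] at h
    rwa [rpow_three_halves (hnn y v)] at h
  have hHinv : ∀ y v, hess y *ᵥ ((hess y)⁻¹ *ᵥ v) = v := by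
    intro y v
    rw [mulVec_mulVec, mul_nonsing_inv _ (isUnit_iff_ne_zero.2 (hhpd y).det_pos.ne'), one_mulVec]
  set q : Fin n → ℝ := fun i => if (i : ℕ) < N then σ i else σ ⟨N, hNn⟩ with hq
  have hqpos : ∀ i, 0 < q i := fun i => by
    simp only [hq]
    split_ifs
    exacts [hσpos i, hσpos _]
  have hσq : ∀ i, σ i ≤ q i := fun i => by
    simp only [hq]
    split_ifs with h
    exacts [le_rfl, hσmono _ _ (by rw [Fin.le_def]; simpa using h)]
  have hqσ : ∀ i, ε * q i ≤ σ i := fun i => by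
    simp only [hq]
    split_ifs
    · exact mul_le_of_le_one_left (hσpos i).le hε1
    · rw [le_div_iff₀ (hσpos _)] at hε
      exact hε.trans (hσmono _ _ (by rw [Fin.le_def]; simp; omega))
  set d := -(Q⁻¹ *ᵥ grad x) with hd
  have hQd : Q *ᵥ d = -grad x := by
    rw [hd, mulVec_neg, mulVec_mulVec,
      mul_nonsing_inv _ (isUnit_det_of_eigenbasis hQsymm hortho hqpos hQeig), one_mulVec]
  obtain ⟨hstep, hres⟩ := quasiNewton_step_bounds (hhsymm x) hQsymm hortho hσpos heig hQeig hσq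
    hqσ hε1 (hHinv x (grad x)) hQd
  set r := √(fderiv ℝ (fderiv ℝ f) x d d) with hr
  have hrlam : r ≤ lam := by
    rw [hr, hlam, hD2]
    exact Real.sqrt_le_sqrt hstep
  have hr1 : r < 1 := by nlinarith
  set w := (hess (x + d))⁻¹ *ᵥ grad (x + d) with hw
  have hmw : grad (x + d) ⬝ᵥ w = fderiv ℝ (fderiv ℝ f) (x + d) w w := by
    rw [hD2, hw, hHinv, dotProduct_comm]
  have hmle : (1 - r) * √(fderiv ℝ (fderiv ℝ f) x w w) ≤ √(grad (x + d) ⬝ᵥ w) := by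
    have h := (hessian_bounds_of_selfConcordant hf hpd hD3 hr hr1 w (t := 1) (by simp)).1
    simp only [one_mul, one_smul, ← hmw] at h
    apply Real.le_sqrt_of_sq_le
    rwa [mul_pow, Real.sq_sqrt (hnn x w)]
  have herr := abs_fderiv_sub_le_of_selfConcordant hf hpd hD3 hr hr1 w
  have hresw := hres w
  rw [← hlam, ← hD1, ← hD2, ← hD2] at hresw
  have hmsq : √(grad (x + d) ⬝ᵥ w) ^ 2 = fderiv ℝ f (x + d) w := by
    rw [hD1, Real.sq_sqrt (hmw ▸ hnn _ _)]
  rcases (Real.sqrt_nonneg (grad (x + d) ⬝ᵥ w)).eq_or_lt with hm0 | hm0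
  · rwa [← hm0]
  rw [hη] at hl1
  refine decrement_bound_lt hε0 hε1 hl0 hl1 (Real.sqrt_nonneg _) hrlam ?_
  set m := √(grad (x + d) ⬝ᵥ w)
  set W := √(fderiv ℝ (fderiv ℝ f) x w w)
  set c := (1 - ε) * lam + r ^ 2 / (1 - r) with hc
  have hr1' : 0 < 1 - r := by linarith
  have hc0 : 0 ≤ c :=
    add_nonneg (mul_nonneg (by linarith) hl0.le) (div_nonneg (sq_nonneg _) hr1'.le)
  have hmc : m ^ 2 ≤ c * W := by
    rw [hmsq, hc]
    linarith [(abs_le.1 herr).2, (abs_le.1 hresw).2]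
  refine le_of_mul_le_mul_right ?_ hm0
  calc (1 - r) * m * m = (1 - r) * m ^ 2 := by ring
    _ ≤ (1 - r) * (c * W) := by gcongr
    _ = c * ((1 - r) * W) := by ring
    _ ≤ c * m := by gcongr
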